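/- Let W be the ℂ-linear span of the products θ⁴[δᵢ]θ⁴[δⱼ]θ⁴[δₖ], where δᵢ, δⱼ, δₖ range over the ten even characteristics subject to the condition that the componentwise mod-2 sum δᵢ+δⱼ+δₖ is an odd characteristic. Then W has dimension exactly 20, and W contains the function Ξ₆[δ] and the function f_δ = 2Ξ₆[δ] − D_δ for every even characteristic δ. -/

import Mathlib

open scoped BigOperators

namespace TwoLoop

/-- 2×2 complex matrices. -/
abbrev Mat2 := Matrix (Fin 2) (Fin 2) ℂ

/-- The genus-2 Siegel upper half space: symmetric 2×2 complex matrices with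
positive definite imaginary part. -/
def SiegelH2 : Set Mat2 := {τ | τ.transpose = τ ∧ (τ.map Complex.im).PosDef}

/-- A (half-integer) theta characteristic `[a;b]`, recorded by its rows `a, b ∈ {0,1}²`. -/
abbrev Char := (Fin 2 → ℤ) × (Fin 2 → ℤ)

/-- The theta constant `θ[a;b](τ) = Σ_{n ∈ ℤ²} exp(πi (n+a/2)ᵀ τ (n+a/2) + πi (n+a/2)·b)`. -/
noncomputable def theta (κ : Char) (τ : Mat2) : ℂ :=
  ∑' n : Fin 2 → ℤ,
    Complex.exp ((Real.pi : ℂ) * Complex.I *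
      ((∑ i, ∑ j, ((n i : ℂ) + (κ.1 i : ℂ) / 2) * τ i j * ((n j : ℂ) + (κ.1 j : ℂ) / 2))
        + ∑ i, ((n i : ℂ) + (κ.1 i : ℂ) / 2) * (κ.2 i : ℂ)))

/-- The ten even characteristics δ₁,…,δ₁₀. -/
def δev : Fin 10 → Char :=
  ![(![0,0], ![0,0]), (![0,0], ![0,1]), (![0,0], ![1,0]), (![0,0], ![1,1]),
    (![0,1], ![0,0]), (![0,1], ![1,0]), (![1,0], ![0,0]), (![1,0], ![0,1]),
    (![1,1], ![0,0]), (![1,1], ![1,1])]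

/-- The six odd characteristics ν₁,…,ν₆. -/
def νodd : Fin 6 → Char :=
  ![(![0,1], ![0,1]), (![1,0], ![1,0]), (![0,1], ![1,1]),
    (![1,0], ![1,1]), (![1,1], ![0,1]), (![1,1], ![1,0])]

/-- `Θ[ε](τ) = θ[ε;0](2τ)`. -/
noncomputable def Θf (ε : Fin 2 → ℤ) (τ : Mat2) : ℂ := theta (ε, ![0,0]) ((2 : ℂ) • τ)

noncomputable def P0 (τ : Mat2) : ℂ :=
  Θf ![0,0] τ ^ 4 + Θf ![0,1] τ ^ 4 + Θf ![1,0] τ ^ 4 + Θf ![1,1] τ ^ 4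
noncomputable def P1 (τ : Mat2) : ℂ :=
  2 * (Θf ![0,0] τ ^ 2 * Θf ![0,1] τ ^ 2 + Θf ![1,0] τ ^ 2 * Θf ![1,1] τ ^ 2)
noncomputable def P2 (τ : Mat2) : ℂ :=
  2 * (Θf ![0,0] τ ^ 2 * Θf ![1,0] τ ^ 2 + Θf ![0,1] τ ^ 2 * Θf ![1,1] τ ^ 2)
noncomputable def P3 (τ : Mat2) : ℂ :=
  2 * (Θf ![0,0] τ ^ 2 * Θf ![1,1] τ ^ 2 + Θf ![0,1] τ ^ 2 * Θf ![1,0] τ ^ 2)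
noncomputable def P4 (τ : Mat2) : ℂ :=
  4 * (Θf ![0,0] τ * Θf ![0,1] τ * Θf ![1,0] τ * Θf ![1,1] τ)

/-- The vector `(P₀,…,P₄)`. -/
noncomputable def Pv : Fin 5 → Mat2 → ℂ := ![P0, P1, P2, P3, P4]

open MvPolynomial in
/-- The Igusa quartic as a polynomial in `x₀,…,x₄`. -/
noncomputable def I4poly : MvPolynomial (Fin 5) ℂ :=
  X 4 ^ 4 + X 4 ^ 2 * X 0 ^ 2 - X 4 ^ 2 * X 1 ^ 2 - X 4 ^ 2 * X 2 ^ 2 - X 4 ^ 2 * X 3 ^ 2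
    + X 1 ^ 2 * X 2 ^ 2 + X 1 ^ 2 * X 3 ^ 2 + X 2 ^ 2 * X 3 ^ 2
    - 2 * (X 0 * X 1 * X 2 * X 3)

/-- The signature `⟨κ|λ⟩ = exp(πi(a_κ·b_λ − b_κ·a_λ))`. -/
noncomputable def sig (κ lam : Char) : ℂ :=
  Complex.exp ((Real.pi : ℂ) * Complex.I *
    (((∑ i, κ.1 i * lam.2 i : ℤ) : ℂ) - ((∑ i, κ.2 i * lam.1 i : ℤ) : ℂ)))

/-- Componentwise mod-2 sum of characteristics. -/
def addChar (κ lam : Char) : Char :=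
  (fun i => (κ.1 i + lam.1 i) % 2, fun i => (κ.2 i + lam.2 i) % 2)

/-- For each even characteristic `δ_d`, the ordering `(k₁,…,k₆)` of `{1,…,6}` (0-indexed) whose
first three entries form the triad of odd characteristics with `δ_d = ν_{k₁}+ν_{k₂}+ν_{k₃}`
and whose last three are the complementary indices. -/
def triad : Fin 10 → Fin 6 → Fin 6 :=
  ![![0,3,5,1,2,4], ![0,1,5,2,3,4], ![0,1,4,2,3,5], ![0,3,4,1,2,5], ![0,1,3,2,4,5],
    ![0,4,5,1,2,3], ![0,1,2,3,4,5], ![0,2,3,1,4,5], ![0,2,5,1,3,4], ![0,2,4,1,3,5]]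

/-- D'Hoker–Phong's `Ξ₆[δ]`. -/
noncomputable def Xi6 (d : Fin 10) (τ : Mat2) : ℂ :=
  ∑ i : Fin 3, ∑ j : Fin 3,
    if i < j then
      sig (νodd (triad d (Fin.castLE (by norm_num) i))) (νodd (triad d (Fin.castLE (by norm_num) j))) *
        ∏ m : Fin 3,
          theta (addChar (addChar (νodd (triad d (Fin.castLE (by norm_num) i)))
              (νodd (triad d (Fin.castLE (by norm_num) j))))
            (νodd (triad d (⟨m.1 + 3, by omega⟩ : Fin 6)))) τ ^ 4
    else 0

/-- The formal derivative `∂I₄/∂θ⁴[δ]` of the Igusa quartic with respect to the ten fourth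
powers of the even theta constants, regarded as independent variables. -/
noncomputable def Dd (d : Fin 10) (τ : Mat2) : ℂ :=
  (1 / 48 : ℂ) *
    (theta (δev d) τ ^ 4 * (∑ d' : Fin 10, theta (δev d') τ ^ 8) - 4 * theta (δev d) τ ^ 12)

/-- `f_δ = 2Ξ₆[δ] − ∂I₄/∂θ⁴[δ]`. -/
noncomputable def fδ (d : Fin 10) (τ : Mat2) : ℂ := 2 * Xi6 d τ - Dd d τ

/-- `Ψ₆`, the weight-6 modular form. -/
noncomputable def Ψ6 (τ : Mat2) : ℂ :=
  P0 τ ^ 3 - 9 * P0 τ * (P1 τ ^ 2 + P2 τ ^ 2 + P3 τ ^ 2 - 4 * P4 τ ^ 2)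
    + 54 * (P1 τ * P2 τ * P3 τ)

/-- `Ψ₁₀`, the weight-10 modular form. -/
noncomputable def Ψ10 (τ : Mat2) : ℂ := ∏ d : Fin 10, theta (δev d) τ ^ 2

/-- A characteristic is even when `a·b` is even. -/
def IsEvenChar (κ : Char) : Prop := (∑ i, κ.1 i * κ.2 i) % 2 = 0

/-- A characteristic is odd when `a·b` is odd. -/
def IsOddChar (κ : Char) : Prop := (∑ i, κ.1 i * κ.2 i) % 2 = 1

/-- The span `W` of the products `θ⁴[δᵢ]θ⁴[δⱼ]θ⁴[δₖ]` with `δᵢ+δⱼ+δₖ` an odd characteristic. -/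
noncomputable def Wodd : Submodule ℂ (SiegelH2 → ℂ) :=
  Submodule.span ℂ
    {g : SiegelH2 → ℂ | ∃ i j k : Fin 10,
      IsOddChar (addChar (addChar (δev i) (δev j)) (δev k)) ∧
      g = fun τ : SiegelH2 =>
        theta (δev i) τ.1 ^ 4 * theta (δev j) τ.1 ^ 4 * theta (δev k) τ.1 ^ 4}

/-!
The fourth powers `θ⁴[δ]` are linear forms `ℓ_δ` in `P₀, …, P₄`, by the duplication formula
expressing `θ²[δ](τ)` through the `Θ[ε](τ)`. So `W` is the image of the span of the cubics
`ℓ_a ℓ_b ℓ_c` over the odd triples, and all of these vanish at the fifteen zero-dimensional cusps.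
By the Riemann relations among the `ℓ_δ`, every cubic form in five variables is a combination of
such cubics and of fifteen products `ℓ_a ℓ_b ℓ_d`, each nonzero at exactly one cusp. Hence the odd
triples span precisely the cubics which vanish at the cusps, a space of dimension `35 - 15 = 20`,
and `∂I₄/∂θ⁴[δ]` is one of those cubics.

No dimension is lost on the Siegel space because `P₀, …, P₄` satisfy no cubic relation: along a
suitable path to infinity, a basis of the cubics has pairwise different orders of vanishing.
-/

open Asymptotics Filter MvPolynomial Topology

section Asymptotics

variable {ι α 𝕜 𝕜' : Type*} [NormedField 𝕜] [NormedField 𝕜'] {l : Filter α} {q : α → 𝕜'}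

lemma isLittleO_pow_pow_of_lt (hq : Tendsto q l (𝓝 0)) {m n : ℕ} (hmn : m < n) :
    (fun x => q x ^ n) =o[l] fun x => q x ^ m :=
  (isLittleO_pow_pow hmn).comp_tendsto hq

lemma isTheta_add_of_isTheta_pow (hq : Tendsto q l (𝓝 0)) {f g : α → 𝕜} {m n : ℕ} (hmn : m < n)
    (hf : f =Θ[l] fun x => q x ^ m) (hg : g =Θ[l] fun x => q x ^ n) :
    (fun x => f x + g x) =Θ[l] fun x => q x ^ m :=
  hf.add_isLittleO (hg.trans_isLittleO (isLittleO_pow_pow_of_lt hq hmn))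

theorem linearIndependent_of_isTheta_pow [l.NeBot] (hq : Tendsto q l (𝓝[≠] 0))
    {f : ι → α → 𝕜} {w : ι → ℕ} (hw : Function.Injective w)
    (hf : ∀ i, f i =Θ[l] fun x => q x ^ w i) : LinearIndependent 𝕜 f := by
  classical
  rw [linearIndependent_iff']
  intro s a hsum
  by_contra! ⟨k, hks, hk⟩
  obtain ⟨i₀, hi₀, hmin⟩ := (s.filter (a · ≠ 0)).exists_min_image w ⟨k, by simp [hks, hk]⟩
  rw [Finset.mem_filter] at hi₀
  have tail_isLittleO : (fun x => ∑ i ∈ s.erase i₀, a i * f i x) =o[l] fun x => q x ^ w i₀ := by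
    refine IsLittleO.fun_sum fun i hi => ?_
    rw [Finset.mem_erase] at hi
    by_cases hai : a i = 0
    · simp only [hai, zero_mul]
      exact isLittleO_zero _ _
    · have hlt : w i₀ < w i :=
        (hmin i (by simp [hi.2, hai])).lt_of_ne fun h => hi.1 (hw h.symm)
      exact ((hf i).trans_isLittleO (isLittleO_pow_pow_of_lt
        (tendsto_nhds_of_tendsto_nhdsWithin hq) hlt)).const_mul_left _
  have head_isTheta : (fun x => a i₀ * f i₀ x) =Θ[l] fun x => q x ^ w i₀ :=
    (isTheta_const_mul_left hi₀.2).mpr (hf i₀)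
  have sum_eq_zero :
      ((fun x => a i₀ * f i₀ x) + fun x => ∑ i ∈ s.erase i₀, a i * f i x) = fun _ => 0 := by
    funext x
    rw [Pi.add_apply, Finset.add_sum_erase s (fun i => a i * f i x) hi₀.1]
    simpa using congrFun hsum x
  have pow_eventually_zero : (fun x => q x ^ w i₀) =ᶠ[l] 0 := by
    have := head_isTheta.add_isLittleO tail_isLittleO
    rwa [sum_eq_zero, isTheta_zero_left] at this
  have pow_ne : ∀ᶠ x in l, q x ^ w i₀ ≠ 0 :=
    (hq.eventually self_mem_nhdsWithin).mono fun x hx => pow_ne_zero _ hx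
  obtain ⟨x, hx, hx'⟩ := (pow_eventually_zero.and pow_ne).exists
  exact hx' hx

lemma tsum_pow_isTheta {e : ι → ℕ} {i₀ : ι} (he : ∀ i, e i₀ ≤ e i) {r : ℝ} (hr : 0 < r)
    (hsum : Summable fun i => r ^ e i) :
    (fun x : ℝ => ∑' i, x ^ e i) =Θ[𝓝[>] 0] fun x => x ^ e i₀ := by
  have pow_le {x : ℝ} (hx : 0 < x) (hxr : x ≤ r) (i : ι) :
      x ^ e i ≤ x ^ e i₀ * (r ^ e i / r ^ e i₀) := by
    have hpow : x ^ (e i - e i₀) ≤ r ^ (e i - e i₀) := pow_le_pow_left₀ hx.le hxr _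
    have hr₀ : r ^ e i₀ ≠ 0 := (pow_pos hr _).ne'
    rw [← Nat.add_sub_of_le (he i), pow_add, pow_add, mul_div_cancel_left₀ _ hr₀]
    gcongr
  have hsum' : Summable fun i => r ^ e i / r ^ e i₀ := hsum.div_const _
  have summable_pow {x : ℝ} (hx : 0 < x) (hxr : x ≤ r) : Summable fun i => x ^ e i :=
    (hsum'.mul_left _).of_nonneg_of_le (fun i => (pow_pos hx _).le) (pow_le hx hxr)
  have hnhds : Set.Ioc 0 r ∈ 𝓝[>] (0 : ℝ) := Ioc_mem_nhdsGT hr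
  refine ⟨IsBigO.of_bound (∑' i, r ^ e i / r ^ e i₀) ?_, IsBigO.of_bound 1 ?_⟩ <;>
    filter_upwards [hnhds] with x ⟨hx, hxr⟩ <;>
    have tsum_nonneg : 0 ≤ ∑' i, x ^ e i := tsum_nonneg fun i => (pow_pos hx _).le
  · rw [Real.norm_of_nonneg tsum_nonneg, Real.norm_of_nonneg (pow_pos hx _).le, mul_comm,
      ← tsum_mul_left]
    exact (summable_pow hx hxr).tsum_le_tsum (pow_le hx hxr) (hsum'.mul_left _)
  · rw [Real.norm_of_nonneg tsum_nonneg, Real.norm_of_nonneg (pow_pos hx _).le, one_mul]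
    exact (summable_pow hx hxr).le_tsum i₀ fun i _ => (pow_pos hx _).le

end Asymptotics

section ThetaSeries

lemma summable_exp_neg_mul_add_sq {c : ℝ} (hc : 0 < c) (x : ℝ) :
    Summable fun n : ℤ => Real.exp (-c * (n + x) ^ 2) := by
  refine (HurwitzZeta.hasSum_int_evenKernel x (div_pos hc Real.pi_pos)).summable.congr fun n => ?_
  congr 1
  field_simp

lemma summable_exp_neg_mul_add_sq_add_add_sq {c : ℝ} (hc : 0 < c) (x y : ℝ) :
    Summable fun n : Fin 2 → ℤ => Real.exp (-c * ((n 0 + x) ^ 2 + (n 1 + y) ^ 2)) := by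
  have hprod := (summable_exp_neg_mul_add_sq hc x).mul_of_nonneg (summable_exp_neg_mul_add_sq hc y)
    (fun n => (Real.exp_pos _).le) fun n => (Real.exp_pos _).le
  refine ((finTwoArrowEquiv ℤ).summable_iff.mpr hprod).congr fun n => ?_
  simp [← Real.exp_add, mul_add]

lemma det_div_trace_mul_le {p r s : ℝ} (h : 0 < p + s) (x y : ℝ) :
    (p * s - r ^ 2) / (p + s) * (x ^ 2 + y ^ 2) ≤ p * x ^ 2 + 2 * r * x * y + s * y ^ 2 := by
  rw [div_mul_eq_mul_div, div_le_iff₀ h]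
  linarith [sq_nonneg (p * x + r * y), sq_nonneg (r * x + s * y)]

/-- The general term of the theta series. -/
noncomputable def thetaTerm (κ : Char) (τ : Mat2) (n : Fin 2 → ℤ) : ℂ :=
  Complex.exp ((Real.pi : ℂ) * Complex.I *
    ((∑ i, ∑ j, ((n i : ℂ) + (κ.1 i : ℂ) / 2) * τ i j * ((n j : ℂ) + (κ.1 j : ℂ) / 2))
      + ∑ i, ((n i : ℂ) + (κ.1 i : ℂ) / 2) * (κ.2 i : ℂ)))

lemma theta_eq_tsum (κ : Char) (τ : Mat2) : theta κ τ = ∑' n, thetaTerm κ τ n := rfl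

lemma norm_thetaTerm (κ : Char) (τ : Mat2) (n : Fin 2 → ℤ) :
    ‖thetaTerm κ τ n‖ = Real.exp (-Real.pi *
      ∑ i, ∑ j, (n i + κ.1 i / 2 : ℝ) * (τ i j).im * (n j + κ.1 j / 2 : ℝ)) := by
  have cast_shift (i : Fin 2) : (n i : ℂ) + (κ.1 i : ℂ) / 2 = ((n i + κ.1 i / 2 : ℝ) : ℂ) := by
    push_cast; rfl
  have cast_int (i : Fin 2) : (κ.2 i : ℂ) = ((κ.2 i : ℝ) : ℂ) := by push_cast; rfl
  rw [thetaTerm, Complex.norm_exp]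
  simp only [cast_shift, cast_int, ← Complex.ofReal_mul, ← Complex.ofReal_sum, mul_assoc,
    Complex.ofReal_re, Complex.I_re, Complex.I_im, Complex.mul_re, Complex.add_im,
    Complex.im_sum, Complex.im_ofReal_mul, Complex.im_mul_ofReal, Complex.ofReal_im]
  ring_nf

variable {τ : Mat2}

lemma apply_one_zero_of_mem_siegelH2 (hτ : τ ∈ SiegelH2) : τ 1 0 = τ 0 1 := by
  conv_lhs => rw [← hτ.1, Matrix.transpose_apply]

lemma summable_norm_thetaTerm (κ : Char) (hτ : τ ∈ SiegelH2) :
    Summable fun n => ‖thetaTerm κ τ n‖ := by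
  have hdiag (i : Fin 2) : 0 < (τ i i).im := hτ.2.diag_pos
  have hsymm : τ 1 0 = τ 0 1 := apply_one_zero_of_mem_siegelH2 hτ
  have hdet : 0 < (τ 0 0).im * (τ 1 1).im - (τ 0 1).im ^ 2 := by
    simpa [Matrix.det_fin_two, hsymm, sq] using hτ.2.det_pos
  have htrace : 0 < (τ 0 0).im + (τ 1 1).im := add_pos (hdiag 0) (hdiag 1)
  refine (summable_exp_neg_mul_add_sq_add_add_sq (mul_pos Real.pi_pos (div_pos hdet htrace))
    (κ.1 0 / 2) (κ.1 1 / 2)).of_nonneg_of_le (fun n => norm_nonneg _) fun n => ?_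
  rw [norm_thetaTerm, Real.exp_le_exp, ← neg_mul_eq_neg_mul, ← neg_mul_eq_neg_mul,
    neg_le_neg_iff, mul_assoc]
  refine mul_le_mul_of_nonneg_left ?_ Real.pi_pos.le
  refine (det_div_trace_mul_le htrace _ _).trans_eq ?_
  simp only [Fin.sum_univ_two, hsymm]
  ring

lemma two_smul_mem_siegelH2 (hτ : τ ∈ SiegelH2) : (2 : ℂ) • τ ∈ SiegelH2 := by
  refine ⟨by rw [Matrix.transpose_smul, hτ.1], ?_⟩
  have him : ((2 : ℂ) • τ).map Complex.im = (2 : ℝ) • τ.map Complex.im := by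
    ext i j
    simp
  exact him ▸ hτ.2.smul two_pos

/-- The residue `c ∈ {0, 1}ᶦ` as an integer vector. -/
def bits {ι : Type*} (c : ι → Fin 2) (i : ι) : ℤ := (c i : ℕ)

/-- The bijection `(c, k, l) ↦ (k + l + c, k - l)`, where `c` is the parity of the sum of the two
image vectors. -/
def sumDiffEquiv (ι : Type*) :
    ((ι → Fin 2) × (ι → ℤ) × (ι → ℤ)) ≃ (ι → ℤ) × (ι → ℤ) where
  toFun q := (q.2.1 + q.2.2 + bits q.1, q.2.1 - q.2.2)
  invFun p := (fun i => ⟨((p.1 i + p.2 i) % 2).toNat, by omega⟩,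
    fun i => (p.1 i + p.2 i) / 2, fun i => (p.1 i + p.2 i) / 2 - p.2 i)
  left_inv q := by
    refine Prod.ext (funext fun i => Fin.ext ?_)
      (Prod.ext (funext fun i => ?_) (funext fun i => ?_))
    all_goals
      simp only [bits, Pi.add_apply, Pi.sub_apply]
      omega
  right_inv p := by
    refine Prod.ext (funext fun i => ?_) (funext fun i => ?_)
    all_goals
      simp only [bits, Pi.add_apply, Pi.sub_apply]
      omega

lemma thetaTerm_mul_thetaTerm (a b : Fin 2 → ℤ) (hτ : τ 1 0 = τ 0 1) (c : Fin 2 → Fin 2)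
    (k l : Fin 2 → ℤ) :
    thetaTerm (a, b) τ (k + l + bits c) * thetaTerm (a, b) τ (k - l)
      = (-1) ^ (∑ i, (bits c i + a i) * b i) *
        (thetaTerm (bits c + a, ![0,0]) ((2 : ℂ) • τ) k
          * thetaTerm (bits c, ![0,0]) ((2 : ℂ) • τ) l) := by
  rw [← Complex.exp_pi_mul_I, ← Complex.exp_int_mul]
  simp only [thetaTerm, ← Complex.exp_add]
  rw [Complex.exp_eq_exp_iff_exists_int]
  refine ⟨∑ i, k i * b i, ?_⟩
  simp [Fin.sum_univ_two, hτ]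
  ring

theorem theta_sq (a b : Fin 2 → ℤ) (hτ : τ ∈ SiegelH2) :
    theta (a, b) τ ^ 2 = ∑ c : Fin 2 → Fin 2,
      (-1) ^ (∑ i, (bits c i + a i) * b i) * (Θf (bits c + a) τ * Θf (bits c) τ) := by
  have hnorm := summable_norm_thetaTerm (a, b) hτ
  have hnorm₂ (ε : Fin 2 → ℤ) := summable_norm_thetaTerm (ε, ![0,0]) (two_smul_mem_siegelH2 hτ)
  have hsum := (sumDiffEquiv (Fin 2)).summable_iff.mpr (summable_mul_of_summable_norm hnorm hnorm)
  calc theta (a, b) τ ^ 2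
      = ∑' p : (Fin 2 → ℤ) × (Fin 2 → ℤ), thetaTerm (a, b) τ p.1 * thetaTerm (a, b) τ p.2 := by
        rw [sq, theta_eq_tsum, tsum_mul_tsum_of_summable_norm hnorm hnorm]
    _ = ∑ c : Fin 2 → Fin 2, ∑' q : (Fin 2 → ℤ) × (Fin 2 → ℤ),
          thetaTerm (a, b) τ (q.1 + q.2 + bits c) * thetaTerm (a, b) τ (q.1 - q.2) := by
        rw [← (sumDiffEquiv (Fin 2)).tsum_eq]
        exact hsum.tsum_prod.trans (tsum_fintype _)
    _ = _ := by
        refine Finset.sum_congr rfl fun c _ => ?_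
        simp only [thetaTerm_mul_thetaTerm a b (apply_one_zero_of_mem_siegelH2 hτ), tsum_mul_left]
        rw [Θf, Θf, theta_eq_tsum, theta_eq_tsum,
          tsum_mul_tsum_of_summable_norm (hnorm₂ _) (hnorm₂ _)]

lemma Θf_add_two_smul (ε e : Fin 2 → ℤ) (τ : Mat2) : Θf (ε + 2 • e) τ = Θf ε τ := by
  rw [Θf, Θf, theta_eq_tsum, theta_eq_tsum,
    ← (Equiv.addRight e).tsum_eq (thetaTerm (ε, ![0,0]) _)]
  refine tsum_congr fun n => congrArg Complex.exp ?_
  simp [Fin.sum_univ_two]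
  ring

lemma Θf_emod_two (ε : Fin 2 → ℤ) (τ : Mat2) : Θf (fun i => ε i % 2) τ = Θf ε τ := by
  rw [← Θf_add_two_smul _ (fun i => ε i / 2)]
  congr 1
  funext i
  simp [Int.emod_add_mul_ediv]

end ThetaSeries

section HomogeneousPolynomials

variable {σ ι R : Type*} [CommSemiring R] {n : ℕ}

lemma homogeneousSubmodule_le_of_prod_mem {v : ι → MvPolynomial σ R}
    (hv : homogeneousSubmodule σ R 1 ≤ Submodule.span R (Set.range v))
    {N : Submodule R (MvPolynomial σ R)} (hN : ∀ a : Fin n → ι, ∏ j, v (a j) ∈ N) :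
    homogeneousSubmodule σ R n ≤ N := by
  rw [← homogeneousSubmodule_one_pow]
  refine (pow_le_pow_left' hv n).trans ?_
  rw [Submodule.span_pow, Submodule.span_le]
  intro p hp
  obtain ⟨f, rfl⟩ := Set.mem_pow.mp hp
  choose a ha using fun j => (f j).2
  simpa only [List.prod_ofFn, ha, SetLike.mem_coe] using hN a

theorem finrank_homogeneousSubmodule [StrongRankCondition R] [Fintype σ] (n : ℕ) :
    Module.finrank R (homogeneousSubmodule σ R n) = (Fintype.card σ).multichoose n := by
  classical
  rw [homogeneousSubmodule_eq_finsupp_supported, ← Sym.card_sym_eq_multichoose,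
    ← Nat.card_eq_fintype_card]
  exact (Module.finrank_eq_nat_card_basis (basisRestrictSupport R _)).trans
    (Nat.card_congr (Sym.equivNatSum σ n).symm)

end HomogeneousPolynomials

section ThetaForms

/-- The coefficients of `θ⁴[δ]` as a linear form in `P₀, …, P₄`. -/
def thetaCoeff : Fin 10 → Fin 5 → ℤ :=
  ![![1,1,1,1,0], ![1,-1,1,-1,0], ![1,1,-1,-1,0], ![1,-1,-1,1,0], ![0,2,0,0,2], ![0,2,0,0,-2],
    ![0,0,2,0,2], ![0,0,2,0,-2], ![0,0,0,2,2], ![0,0,0,2,-2]]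

theorem theta_pow_four (d : Fin 10) {τ : Mat2} (hτ : τ ∈ SiegelH2) :
    theta (δev d) τ ^ 4 = ∑ i, (thetaCoeff d i : ℂ) * Pv i τ := by
  have Θf_bits (c : Fin 2 → Fin 2) :
      Θf (bits c + (δev d).1) τ
        = Θf ![((c 0 : ℕ) + (δev d).1 0) % 2, ((c 1 : ℕ) + (δev d).1 1) % 2] τ := by
    rw [← Θf_emod_two]
    congr 1
    funext i
    fin_cases i <;> rfl
  have hbits (c : Fin 2 → Fin 2) : bits c = ![((c 0 : ℕ) : ℤ), ((c 1 : ℕ) : ℤ)] := by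
    funext i
    fin_cases i <;> rfl
  rw [show 4 = 2 * 2 by rfl, pow_mul, theta_sq _ _ hτ, ← (finTwoArrowEquiv (Fin 2)).symm.sum_comp,
    Fintype.sum_prod_type]
  simp only [Θf_bits, Fin.sum_univ_two, finTwoArrowEquiv_symm_apply]
  simp only [hbits]
  fin_cases d <;>
    simp [δev, thetaCoeff, Pv, P0, P1, P2, P3, P4, Fin.sum_univ_five] <;> ring

/-- The linear form in `X₀, …, X₄` which takes the value `θ⁴[δ]` at `(P₀, …, P₄)`. -/
noncomputable def thetaForm (d : Fin 10) : MvPolynomial (Fin 5) ℂ :=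
  ∑ i, (thetaCoeff d i : ℂ) • X i

lemma aeval_thetaForm {A : Type*} [CommRing A] [Algebra ℂ A] (x : Fin 5 → A) (d : Fin 10) :
    aeval x (thetaForm d) = ∑ i, (thetaCoeff d i : ℂ) • x i := by
  simp only [thetaForm, map_sum, map_smul, aeval_X]

lemma thetaForm_mem_homogeneousSubmodule (d : Fin 10) :
    thetaForm d ∈ homogeneousSubmodule (Fin 5) ℂ 1 :=
  Submodule.sum_mem _ fun i _ => Submodule.smul_mem _ _ (isHomogeneous_X _ i)

lemma sum_thetaCoeff_mul_thetaCoeff :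
    ∀ i j, ∑ d, thetaCoeff d i * thetaCoeff d j = if i = j then ![4, 12, 12, 12, 24] i else 0 := by
  decide +kernel

lemma homogeneousSubmodule_one_le_span_thetaForm :
    homogeneousSubmodule (Fin 5) ℂ 1 ≤ Submodule.span ℂ (Set.range thetaForm) := by
  rw [homogeneousSubmodule_one_eq_span_X, Submodule.span_le]
  rintro _ ⟨i, rfl⟩
  have norm_sq_ne_zero : ∀ i, (![4, 12, 12, 12, 24] : Fin 5 → ℤ) i ≠ 0 := by decide
  have sum_eq : ∑ d, (thetaCoeff d i : ℂ) • thetaForm d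
      = ((![4, 12, 12, 12, 24] : Fin 5 → ℤ) i : ℂ) • X i := by
    simp only [thetaForm, Finset.smul_sum, smul_smul]
    rw [Finset.sum_comm]
    simp only [← Finset.sum_smul, ← Int.cast_mul, ← Int.cast_sum, sum_thetaCoeff_mul_thetaCoeff,
      Int.cast_ite, Int.cast_zero, ite_smul, zero_smul, Finset.sum_ite_eq, Finset.mem_univ, if_true]
  have cast_ne_zero : ((![4, 12, 12, 12, 24] : Fin 5 → ℤ) i : ℂ) ≠ 0 :=
    Int.cast_ne_zero.mpr (norm_sq_ne_zero i)
  refine (Submodule.smul_mem_iff _ cast_ne_zero).mp ?_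
  rw [← sum_eq]
  exact Submodule.sum_mem _ fun d _ =>
    Submodule.smul_mem _ _ (Submodule.subset_span (Set.mem_range_self d))

end ThetaForms

section Cusps

/-- Three even characteristics whose sum is odd. -/
abbrev IsOddTriple (a b c : Fin 10) : Prop :=
  IsOddChar (addChar (addChar (δev a) (δev b)) (δev c))

instance : DecidablePred IsOddChar := fun _ => inferInstanceAs (Decidable (_ = _))

/-- The values of `(P₀, …, P₄)` at the fifteen zero-dimensional cusps, up to scaling. -/
def cusp : Fin 15 → Fin 5 → ℤ :=
  ![![1,0,0,0,0], ![1,1,0,0,0], ![1,-1,0,0,0], ![1,0,1,0,0], ![1,0,-1,0,0], ![1,0,0,1,0],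
    ![1,0,0,-1,0], ![1,1,1,1,1], ![1,1,1,1,-1], ![1,1,-1,-1,1], ![1,1,-1,-1,-1], ![1,-1,1,-1,1],
    ![1,-1,1,-1,-1], ![1,-1,-1,1,1], ![1,-1,-1,1,-1]]

/-- For each cusp, three even theta constants whose product vanishes at every other cusp but not at
this one. -/
def cuspTriple : Fin 15 → Multiset (Fin 10) :=
  ![{0,1,2}, {0,2,4}, {1,3,4}, {0,1,6}, {2,3,6}, {0,3,8}, {1,2,8}, {0,4,6}, {0,5,7}, {2,4,7},
    {2,5,6}, {1,5,6}, {1,4,7}, {3,5,7}, {3,4,6}]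

/-- The value of `θ⁴[δ]` at a cusp. -/
def cuspValue (d : Fin 10) (k : Fin 15) : ℤ := thetaCoeff d ⬝ᵥ cusp k

/-- A linear relation `θ⁴[δ] = ±θ⁴[δ'] ± θ⁴[δ''] ± θ⁴[δ''']` among four even theta constants. -/
def IsRiemannRelation (a b c d : Fin 10) : Prop :=
  ∃ s t u : ℤˣ, ∀ i,
    thetaCoeff a i = s * thetaCoeff b i + t * thetaCoeff c i + u * thetaCoeff d i

instance (a b c d : Fin 10) : Decidable (IsRiemannRelation a b c d) :=
  inferInstanceAs (Decidable (∃ _, _))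

lemma cuspValue_mul_eq_zero_of_isOddTriple :
    ∀ a b c, IsOddTriple a b c → ∀ k, cuspValue a k * cuspValue b k * cuspValue c k = 0 := by
  decide +kernel

lemma prod_cuspTriple_cuspValue_eq_zero_iff :
    ∀ k k', ((cuspTriple k).map fun d => cuspValue d k').prod = 0 ↔ k ≠ k' := by
  decide +kernel

lemma cuspValue_mul_sum_sq_sub_four_mul_cube : ∀ d k,
    cuspValue d k * ∑ e, cuspValue e k ^ 2 - 4 * cuspValue d k ^ 3 = 0 := by
  decide +kernel

lemma exists_isRiemannRelation_ne :
    ∀ a b, ∃ c e f, (c ≠ a ∧ c ≠ b) ∧ (e ≠ a ∧ e ≠ b) ∧ (f ≠ a ∧ f ≠ b) ∧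
      IsRiemannRelation a c e f := by
  decide +kernel

lemma cuspTriple_or_isRiemannRelation :
    ∀ a b, a < b → ∀ c, b < c → ¬ IsOddTriple a b c → ∃ k, cuspTriple k = {a, b, c} ∨
      ∃ d, cuspTriple k = {a, b, d} ∧ ∃ e f, IsOddTriple a b e ∧ IsOddTriple a b f ∧
        IsRiemannRelation c d e f := by
  decide +kernel

/-- The span of the products `ℓ_a ℓ_b ℓ_c`, for `ℓ_d` the linear form of `θ⁴[δ_d]`, over the odd
triples `a, b, c`. -/
noncomputable def oddSpan : Submodule ℂ (MvPolynomial (Fin 5) ℂ) :=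
  Submodule.span ℂ
    {p | ∃ a b c, IsOddTriple a b c ∧ p = thetaForm a * thetaForm b * thetaForm c}

/-- A product of three theta forms which vanishes at every cusp but the `k`-th. These cubics span a
complement of `oddSpan`. -/
noncomputable def cuspCubic (k : Fin 15) : MvPolynomial (Fin 5) ℂ :=
  ((cuspTriple k).map thetaForm).prod

lemma cuspCubic_eq {k : Fin 15} {a b c : Fin 10} (h : cuspTriple k = {a, b, c}) :
    cuspCubic k = thetaForm a * thetaForm b * thetaForm c := by
  simp [cuspCubic, h, mul_assoc]

lemma card_cuspTriple : ∀ k, (cuspTriple k).card = 3 := by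
  decide

lemma mul_thetaForm_mem_of_isRiemannRelation {N : Submodule ℂ (MvPolynomial (Fin 5) ℂ)}
    {p : MvPolynomial (Fin 5) ℂ} {a b c d : Fin 10} (h : IsRiemannRelation a b c d)
    (hb : p * thetaForm b ∈ N) (hc : p * thetaForm c ∈ N) (hd : p * thetaForm d ∈ N) :
    p * thetaForm a ∈ N := by
  obtain ⟨s, t, u, h⟩ := h
  have thetaForm_eq : thetaForm a = (s : ℤ) • thetaForm b + (t : ℤ) • thetaForm c
      + (u : ℤ) • thetaForm d := by
    simp only [thetaForm, h, Finset.smul_sum, ← Finset.sum_add_distrib, Int.cast_add, Int.cast_mul,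
      add_smul, mul_smul, Int.cast_smul_eq_zsmul]
  rw [thetaForm_eq, mul_add, mul_add, mul_smul_comm, mul_smul_comm, mul_smul_comm]
  exact N.add_mem (N.add_mem (zsmul_mem hb _) (zsmul_mem hc _)) (zsmul_mem hd _)

lemma thetaForm_mul_mem_of_lt {a b c : Fin 10} (hab : a < b) (hbc : b < c) :
    thetaForm a * thetaForm b * thetaForm c
      ∈ oddSpan ⊔ Submodule.span ℂ (Set.range cuspCubic) := by
  have odd_mem {d : Fin 10} (h : IsOddTriple a b d) : thetaForm a * thetaForm b * thetaForm d
      ∈ oddSpan ⊔ Submodule.span ℂ (Set.range cuspCubic) :=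
    Submodule.mem_sup_left (Submodule.subset_span ⟨a, b, d, h, rfl⟩)
  have cusp_mem {d : Fin 10} {k : Fin 15} (h : cuspTriple k = {a, b, d}) :
      thetaForm a * thetaForm b * thetaForm d
        ∈ oddSpan ⊔ Submodule.span ℂ (Set.range cuspCubic) :=
    Submodule.mem_sup_right (Submodule.subset_span ⟨k, cuspCubic_eq h⟩)
  by_cases hodd : IsOddTriple a b c
  · exact odd_mem hodd
  obtain ⟨k, hk | ⟨d, hk, e, f, he, hf, hrel⟩⟩ :=
    cuspTriple_or_isRiemannRelation a b hab c hbc hodd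
  · exact cusp_mem hk
  · exact mul_thetaForm_mem_of_isRiemannRelation hrel (cusp_mem hk) (odd_mem he) (odd_mem hf)

lemma thetaForm_mul_mem_of_ne {a b c : Fin 10} (hab : a ≠ b) (hca : c ≠ a) (hcb : c ≠ b) :
    thetaForm a * thetaForm b * thetaForm c
      ∈ oddSpan ⊔ Submodule.span ℂ (Set.range cuspCubic) := by
  wlog hlt : a < b generalizing a b
  · rw [mul_comm (thetaForm a)]
    exact this hab.symm hcb hca (hab.lt_or_gt.resolve_left hlt)
  rcases hca.lt_or_gt with hca | hac
  · rw [mul_comm, ← mul_assoc]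
    exact thetaForm_mul_mem_of_lt hca hlt
  rcases hcb.lt_or_gt with hcb | hbc
  · rw [mul_right_comm]
    exact thetaForm_mul_mem_of_lt hac hcb
  · exact thetaForm_mul_mem_of_lt hlt hbc

lemma thetaForm_mul_mem (a b c : Fin 10) :
    thetaForm a * thetaForm b * thetaForm c
      ∈ oddSpan ⊔ Submodule.span ℂ (Set.range cuspCubic) := by
  set N := oddSpan ⊔ Submodule.span ℂ (Set.range cuspCubic)
  have mem_of_forall_ne {a b : Fin 10}
      (h : ∀ c, c ≠ a → c ≠ b → thetaForm a * thetaForm b * thetaForm c ∈ N) :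
      thetaForm a * thetaForm b * thetaForm a ∈ N := by
    obtain ⟨c, e, f, ⟨hca, hcb⟩, ⟨hea, heb⟩, ⟨hfa, hfb⟩, hrel⟩ :=
      exists_isRiemannRelation_ne a b
    exact mul_thetaForm_mem_of_isRiemannRelation hrel (h c hca hcb) (h e hea heb) (h f hfa hfb)
  have sq_mul_mem (a b : Fin 10) : thetaForm a * thetaForm b * thetaForm a ∈ N := by
    refine mem_of_forall_ne fun c hca hcb => ?_
    rcases eq_or_ne a b with rfl | hab
    · rw [mul_right_comm]
      exact mem_of_forall_ne fun d hda hdc => thetaForm_mul_mem_of_ne hca.symm hda hdc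
    · exact thetaForm_mul_mem_of_ne hab hca hcb
  rcases eq_or_ne a b with rfl | hab
  · rw [mul_right_comm]
    exact sq_mul_mem a c
  rcases eq_or_ne c a with rfl | hca
  · exact sq_mul_mem c b
  rcases eq_or_ne c b with rfl | hcb
  · rw [mul_comm (thetaForm a)]
    exact sq_mul_mem c a
  exact thetaForm_mul_mem_of_ne hab hca hcb

lemma thetaForm_mul_mem_homogeneousSubmodule (a b c : Fin 10) :
    thetaForm a * thetaForm b * thetaForm c ∈ homogeneousSubmodule (Fin 5) ℂ 3 :=
  ((thetaForm_mem_homogeneousSubmodule a).mul (thetaForm_mem_homogeneousSubmodule b)).mul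
    (thetaForm_mem_homogeneousSubmodule c)

lemma oddSpan_le_homogeneousSubmodule : oddSpan ≤ homogeneousSubmodule (Fin 5) ℂ 3 := by
  rw [oddSpan, Submodule.span_le]
  rintro _ ⟨a, b, c, -, rfl⟩
  exact thetaForm_mul_mem_homogeneousSubmodule a b c

lemma oddSpan_sup_span_cuspCubic :
    oddSpan ⊔ Submodule.span ℂ (Set.range cuspCubic) = homogeneousSubmodule (Fin 5) ℂ 3 := by
  refine le_antisymm (sup_le oddSpan_le_homogeneousSubmodule ?_)
    (homogeneousSubmodule_le_of_prod_mem homogeneousSubmodule_one_le_span_thetaForm fun a => ?_)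
  · rw [Submodule.span_le]
    rintro _ ⟨k, rfl⟩
    obtain ⟨a, b, c, h⟩ := Multiset.card_eq_three.mp (card_cuspTriple k)
    exact cuspCubic_eq h ▸ thetaForm_mul_mem_homogeneousSubmodule a b c
  · rw [Fin.prod_univ_three]
    exact thetaForm_mul_mem _ _ _

/-- Evaluation of polynomials at the fifteen cusps. -/
noncomputable def evalAtCusps : MvPolynomial (Fin 5) ℂ →ₐ[ℂ] (Fin 15 → ℂ) :=
  aeval fun i k => (cusp k i : ℂ)

lemma evalAtCusps_thetaForm (d : Fin 10) (k : Fin 15) :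
    evalAtCusps (thetaForm d) k = (cuspValue d k : ℂ) := by
  simp [evalAtCusps, aeval_thetaForm, cuspValue, dotProduct]

lemma evalAtCusps_cuspCubic_eq_zero_iff {k k' : Fin 15} :
    evalAtCusps (cuspCubic k) k' = 0 ↔ k ≠ k' := by
  have eval_eq : evalAtCusps (cuspCubic k) k'
      = (((cuspTriple k).map fun d => cuspValue d k').prod : ℤ) := by
    obtain ⟨a, b, c, h⟩ := Multiset.card_eq_three.mp (card_cuspTriple k)
    simp [cuspCubic_eq h, h, evalAtCusps_thetaForm, mul_assoc]
  rw [eval_eq, Int.cast_eq_zero, prod_cuspTriple_cuspValue_eq_zero_iff]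

lemma evalAtCusps_eq_zero_of_mem_oddSpan {p : MvPolynomial (Fin 5) ℂ} (hp : p ∈ oddSpan) :
    evalAtCusps p = 0 := by
  suffices oddSpan ≤ LinearMap.ker evalAtCusps.toLinearMap from this hp
  rw [oddSpan, Submodule.span_le]
  rintro _ ⟨a, b, c, h, rfl⟩
  funext k
  simpa [evalAtCusps_thetaForm] using cuspValue_mul_eq_zero_of_isOddTriple a b c h k

lemma eq_zero_of_evalAtCusps_sum_cuspCubic {c : Fin 15 → ℂ}
    (h : evalAtCusps (∑ k, c k • cuspCubic k) = 0) : c = 0 := by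
  funext k
  have sum_eq : evalAtCusps (∑ k, c k • cuspCubic k) k = c k * evalAtCusps (cuspCubic k) k := by
    simp only [map_sum, map_smul, Finset.sum_apply, Pi.smul_apply, smul_eq_mul]
    refine Finset.sum_eq_single k (fun k' _ hk' => ?_) (by simp)
    rw [evalAtCusps_cuspCubic_eq_zero_iff.mpr hk', mul_zero]
  rw [h, Pi.zero_apply, eq_comm, mul_eq_zero] at sum_eq
  exact sum_eq.resolve_right (evalAtCusps_cuspCubic_eq_zero_iff.not.mpr (not_not.mpr rfl))

lemma linearIndependent_cuspCubic : LinearIndependent ℂ cuspCubic :=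
  Fintype.linearIndependent_iff.mpr fun c hc =>
    congrFun (eq_zero_of_evalAtCusps_sum_cuspCubic (by rw [hc, map_zero]))

theorem mem_oddSpan_of_evalAtCusps_eq_zero {p : MvPolynomial (Fin 5) ℂ}
    (hp : p ∈ homogeneousSubmodule (Fin 5) ℂ 3) (h : evalAtCusps p = 0) : p ∈ oddSpan := by
  rw [← oddSpan_sup_span_cuspCubic] at hp
  obtain ⟨q, hq, r, hr, rfl⟩ := Submodule.mem_sup.mp hp
  obtain ⟨c, rfl⟩ := (Submodule.mem_span_range_iff_exists_fun ℂ).mp hr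
  rw [map_add, evalAtCusps_eq_zero_of_mem_oddSpan hq, zero_add] at h
  simpa [eq_zero_of_evalAtCusps_sum_cuspCubic h] using hq

lemma disjoint_oddSpan_span_cuspCubic :
    Disjoint oddSpan (Submodule.span ℂ (Set.range cuspCubic)) := by
  rw [Submodule.disjoint_def]
  intro p hp hp'
  obtain ⟨c, rfl⟩ := (Submodule.mem_span_range_iff_exists_fun ℂ).mp hp'
  simp [eq_zero_of_evalAtCusps_sum_cuspCubic (evalAtCusps_eq_zero_of_mem_oddSpan hp)]

/-- The formal derivative `∂I₄/∂θ⁴[δ]` as a cubic in `X₀, …, X₄`. -/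
noncomputable def igusaDerivative (d : Fin 10) : MvPolynomial (Fin 5) ℂ :=
  (1 / 48 : ℂ) • (thetaForm d * ∑ e, thetaForm e ^ 2 - (4 : ℂ) • thetaForm d ^ 3)

theorem igusaDerivative_mem_oddSpan (d : Fin 10) : igusaDerivative d ∈ oddSpan := by
  refine oddSpan.smul_mem _ (mem_oddSpan_of_evalAtCusps_eq_zero ?_ ?_)
  · have hd := thetaForm_mem_homogeneousSubmodule d
    have hsum : ∑ e, thetaForm e ^ 2 ∈ homogeneousSubmodule (Fin 5) ℂ 2 :=
      Submodule.sum_mem _ fun e _ => (thetaForm_mem_homogeneousSubmodule e).pow 2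
    exact Submodule.sub_mem _ (hd.mul hsum) (Submodule.smul_mem _ _ (hd.pow 3))
  · funext k
    simpa [evalAtCusps_thetaForm] using
      congrArg (Int.cast : ℤ → ℂ) (cuspValue_mul_sum_sq_sub_four_mul_cube d k)

lemma finrank_oddSpan_add_fifteen :
    Module.finrank ℂ oddSpan + 15 = Module.finrank ℂ (homogeneousSubmodule (Fin 5) ℂ 3) := by
  have : Module.Finite ℂ (homogeneousSubmodule (Fin 5) ℂ 3) :=
    Module.Finite.iff_fg.mpr (homogeneousSubmodule_fg _ _ _)
  have : Module.Finite ℂ oddSpan :=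
    Submodule.finiteDimensional_of_le oddSpan_le_homogeneousSubmodule
  have : Module.Finite ℂ (Submodule.span ℂ (Set.range cuspCubic)) :=
    .span_of_finite ℂ (Set.finite_range cuspCubic)
  have finrank_span : Module.finrank ℂ (Submodule.span ℂ (Set.range cuspCubic)) = 15 := by
    rw [finrank_span_eq_card linearIndependent_cuspCubic, Fintype.card_fin]
  rw [← finrank_span, ← Submodule.finrank_sup_add_finrank_inf_eq,
    disjoint_oddSpan_span_cuspCubic.eq_bot, finrank_bot, add_zero, oddSpan_sup_span_cuspCubic]

end Cusps

section NoCubicRelation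

/-- A path of purely imaginary matrices going to infinity, along which the four `Θ[ε]` have
different orders of magnitude. -/
noncomputable def siegelPath (n : ℕ) : Mat2 :=
  ((n + 1 : ℂ) * Complex.I) • !![15, -13; -13, 23]

lemma siegelPath_mem (n : ℕ) : siegelPath n ∈ SiegelH2 := by
  refine ⟨?_, Matrix.PosDef.of_dotProduct_mulVec_pos ?_ fun x hx => ?_⟩
  · ext i j
    fin_cases i <;> fin_cases j <;> simp [siegelPath]
  · ext i j
    fin_cases i <;> fin_cases j <;> simp [siegelPath]
  · have hx' : x 0 ≠ 0 ∨ x 1 ≠ 0 := by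
      by_contra! h
      exact hx (by ext i; fin_cases i <;> simp [h])
    have hpos : 0 < (n + 1 : ℝ) * (2 * x 0 ^ 2 + 10 * x 1 ^ 2 + 13 * (x 0 - x 1) ^ 2) := by
      rcases hx' with h | h <;> positivity
    refine hpos.trans_eq ?_
    simp [siegelPath, Matrix.mulVec, dotProduct, Fin.sum_univ_two]
    ring

/-- The parameter in which the theta series along `siegelPath` are power series. -/
noncomputable def nome (n : ℕ) : ℝ := Real.exp (-(Real.pi / 2) * (n + 1))

lemma nome_tendsto : Tendsto nome atTop (𝓝[>] 0) := by
  refine tendsto_nhdsWithin_iff.mpr ⟨?_, .of_forall fun n => Real.exp_pos _⟩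
  refine Real.tendsto_exp_atBot.comp (Tendsto.const_mul_atTop_of_neg (by linarith [Real.pi_pos]) ?_)
  exact tendsto_atTop_add_const_right _ _ tendsto_natCast_atTop_atTop

/-- The exponent of `nome` in the term of `Θ[ε]` with index `m`. -/
def nomeExponent (ε m : Fin 2 → ℤ) : ℕ :=
  2 * (2 * m 0 + ε 0).natAbs ^ 2 + 10 * (2 * m 1 + ε 1).natAbs ^ 2
    + 13 * (2 * m 0 + ε 0 - (2 * m 1 + ε 1)).natAbs ^ 2

lemma nomeExponent_zero_le {ε : Fin 2 → ℤ} (hε : ∀ i, ε i ∈ Set.Icc 0 1) (m : Fin 2 → ℤ) :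
    nomeExponent ε 0 ≤ nomeExponent ε m := by
  have h0 := hε 0
  have h1 := hε 1
  rw [Set.mem_Icc] at h0 h1
  unfold nomeExponent
  gcongr 2 * ?_ ^ 2 + 10 * ?_ ^ 2 + 13 * ?_ ^ 2 <;> simp only [Pi.zero_apply] <;> omega

lemma thetaTerm_siegelPath (ε m : Fin 2 → ℤ) (n : ℕ) :
    thetaTerm (ε, ![0,0]) ((2 : ℂ) • siegelPath n) m = ((nome n ^ nomeExponent ε m : ℝ) : ℂ) := by
  have abs_sq_cast (a : ℤ) : ((|a| : ℤ) : ℂ) ^ 2 = (a : ℂ) ^ 2 := by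
    rw [← Int.cast_pow, sq_abs, Int.cast_pow]
  rw [nome, ← Real.exp_nat_mul, thetaTerm, Complex.ofReal_exp]
  congr 1
  simp only [nomeExponent, siegelPath, Fin.sum_univ_two]
  push_cast
  simp [abs_sq_cast]
  linear_combination (15 * (m 0 + ε 0 / 2) ^ 2 - 26 * (m 0 + ε 0 / 2) * (m 1 + ε 1 / 2)
    + 23 * (m 1 + ε 1 / 2) ^ 2 : ℂ) * 2 * Real.pi * (n + 1) * Complex.I_mul_I

lemma Θf_siegelPath_isTheta {ε : Fin 2 → ℤ} (hε : ∀ i, ε i ∈ Set.Icc 0 1) :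
    (fun n => Θf ε (siegelPath n)) =Θ[atTop] fun n => nome n ^ nomeExponent ε 0 := by
  have summable_nome : Summable fun m => nome 0 ^ nomeExponent ε m := by
    refine (summable_norm_thetaTerm (ε, ![0,0])
      (two_smul_mem_siegelH2 (siegelPath_mem 0))).congr fun m => ?_
    rw [thetaTerm_siegelPath, Complex.norm_real, Real.norm_of_nonneg (by unfold nome; positivity)]
  have Θf_eq (n : ℕ) : Θf ε (siegelPath n) = ((∑' m, nome n ^ nomeExponent ε m : ℝ) : ℂ) := by
    rw [Θf, theta_eq_tsum, Complex.ofReal_tsum]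
    exact tsum_congr fun m => thetaTerm_siegelPath ε m n
  simp only [Θf_eq]
  rw [Complex.isTheta_ofReal_left]
  have hΘ := tsum_pow_isTheta (nomeExponent_zero_le hε) (Real.exp_pos _) summable_nome
  exact ⟨hΘ.1.comp_tendsto nome_tendsto, hΘ.2.comp_tendsto nome_tendsto⟩

/-- The monomial in the four `Θ[ε]` with the given exponents, along `siegelPath`. -/
noncomputable def ΘMonomial (i j k l n : ℕ) : ℂ :=
  Θf ![0,0] (siegelPath n) ^ i * Θf ![0,1] (siegelPath n) ^ j * Θf ![1,0] (siegelPath n) ^ k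
    * Θf ![1,1] (siegelPath n) ^ l

lemma ΘMonomial_isTheta (i j k l : ℕ) :
    ΘMonomial i j k l =Θ[atTop] fun n => nome n ^ (23 * j + 15 * k + 12 * l) := by
  have hA : (fun n => Θf ![0,0] (siegelPath n)) =Θ[atTop] fun n => nome n ^ 0 :=
    Θf_siegelPath_isTheta (by simp [Fin.forall_fin_two])
  have hB : (fun n => Θf ![0,1] (siegelPath n)) =Θ[atTop] fun n => nome n ^ 23 :=
    Θf_siegelPath_isTheta (by simp [Fin.forall_fin_two])
  have hC : (fun n => Θf ![1,0] (siegelPath n)) =Θ[atTop] fun n => nome n ^ 15 :=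
    Θf_siegelPath_isTheta (by simp [Fin.forall_fin_two])
  have hD : (fun n => Θf ![1,1] (siegelPath n)) =Θ[atTop] fun n => nome n ^ 12 :=
    Θf_siegelPath_isTheta (by simp [Fin.forall_fin_two])
  have hmul := (((hA.pow i).mul (hB.pow j)).mul (hC.pow k)).mul (hD.pow l)
  simp only [pow_zero, one_pow, one_mul, ← pow_mul, ← pow_add] at hmul
  exact hmul

lemma isTheta_add_ΘMonomial {f : ℕ → ℂ} {m : ℕ} (hf : f =Θ[atTop] fun n => nome n ^ m)
    {i j k l : ℕ} (h : m < 23 * j + 15 * k + 12 * l) :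
    (fun n => f n + ΘMonomial i j k l n) =Θ[atTop] fun n => nome n ^ m :=
  isTheta_add_of_isTheta_pow (tendsto_nhds_of_tendsto_nhdsWithin nome_tendsto) h hf
    (ΘMonomial_isTheta i j k l)

/-- The orders of vanishing in `nome` of `P₀, …, P₄` along `siegelPath`. -/
def pOrder : Fin 5 → ℕ := ![0, 46, 30, 24, 50]

lemma Pv_siegelPath (i : Fin 5) (n : ℕ) :
    Pv i (siegelPath n) =
      ![ΘMonomial 4 0 0 0 n + ΘMonomial 0 4 0 0 n + ΘMonomial 0 0 4 0 n + ΘMonomial 0 0 0 4 n,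
        2 * (ΘMonomial 2 2 0 0 n + ΘMonomial 0 0 2 2 n),
        2 * (ΘMonomial 2 0 2 0 n + ΘMonomial 0 2 0 2 n),
        2 * (ΘMonomial 2 0 0 2 n + ΘMonomial 0 2 2 0 n),
        4 * ΘMonomial 1 1 1 1 n] i := by
  fin_cases i <;> simp [Pv, P0, P1, P2, P3, P4, ΘMonomial]

lemma Pv_siegelPath_isTheta (i : Fin 5) :
    (fun n => Pv i (siegelPath n)) =Θ[atTop] fun n => nome n ^ pOrder i := by
  simp only [Pv_siegelPath]
  fin_cases i
  · exact isTheta_add_ΘMonomial (isTheta_add_ΘMonomial (isTheta_add_ΘMonomial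
      (ΘMonomial_isTheta 4 0 0 0) (by decide)) (by decide)) (by decide)
  · exact (isTheta_const_mul_left two_ne_zero).mpr
      (isTheta_add_ΘMonomial (ΘMonomial_isTheta 2 2 0 0) (by decide))
  · exact (isTheta_const_mul_left two_ne_zero).mpr
      (isTheta_add_ΘMonomial (ΘMonomial_isTheta 2 0 2 0) (by decide))
  · exact (isTheta_const_mul_left two_ne_zero).mpr
      (isTheta_add_ΘMonomial (ΘMonomial_isTheta 2 0 0 2) (by decide))
  · exact (isTheta_const_mul_left (by norm_num)).mpr (ΘMonomial_isTheta 1 1 1 1)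

lemma igusa_cubic_siegelPath_isTheta :
    (fun n => Pv 0 (siegelPath n) * Pv 4 (siegelPath n) ^ 2
      - 2 * (Pv 1 (siegelPath n) * Pv 2 (siegelPath n) * Pv 3 (siegelPath n)))
      =Θ[atTop] fun n => nome n ^ 108 := by
  have cubic_eq (n : ℕ) : Pv 0 (siegelPath n) * Pv 4 (siegelPath n) ^ 2
      - 2 * (Pv 1 (siegelPath n) * Pv 2 (siegelPath n) * Pv 3 (siegelPath n))
      = -16 * (ΘMonomial 4 0 4 4 n + ΘMonomial 4 4 0 4 n + ΘMonomial 4 4 4 0 n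
        + ΘMonomial 0 4 4 4 n) := by
    simp only [Pv_siegelPath, ΘMonomial, Matrix.cons_val]
    ring
  simp only [cubic_eq]
  refine (isTheta_const_mul_left (by norm_num)).mpr ?_
  exact isTheta_add_ΘMonomial (isTheta_add_ΘMonomial (isTheta_add_ΘMonomial
    (ΘMonomial_isTheta 4 0 4 4) (by decide)) (by decide)) (by decide)

/-- The spanning set of the cubics in `X₀, …, X₄` indexed by the monomials, with `X₀X₄²` replaced
by `X₀X₄² - 2X₁X₂X₃`: on `P₀, …, P₄` the leading terms of the two monomials cancel. -/
noncomputable def cubic (s : Sym (Fin 5) 3) : MvPolynomial (Fin 5) ℂ :=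
  if (s : Multiset (Fin 5)) = {0, 4, 4} then
    X 0 * X 4 ^ 2 - (2 : ℂ) • (X 1 * X 2 * X 3)
  else ((s : Multiset (Fin 5)).map X).prod

/-- The order of vanishing in `nome` of a `cubic` in `P₀, …, P₄` along `siegelPath`. -/
def cubicOrder (s : Sym (Fin 5) 3) : ℕ :=
  if (s : Multiset (Fin 5)) = {0, 4, 4} then 108 else ((s : Multiset (Fin 5)).map pOrder).sum

lemma cubicOrder_injective : Function.Injective cubicOrder := by
  decide +kernel

/-- Evaluation of polynomials at the modular forms `P₀, …, P₄`. -/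
noncomputable def evalPv : MvPolynomial (Fin 5) ℂ →ₐ[ℂ] (SiegelH2 → ℂ) :=
  aeval fun i τ => Pv i τ.1

lemma evalPv_X (i : Fin 5) (τ : SiegelH2) : evalPv (X i) τ = Pv i τ.1 := by
  rw [evalPv, aeval_X]

lemma evalPv_cubic_siegelPath_isTheta (s : Sym (Fin 5) 3) :
    (fun n => evalPv (cubic s) ⟨siegelPath n, siegelPath_mem n⟩)
      =Θ[atTop] fun n => nome n ^ cubicOrder s := by
  unfold cubic cubicOrder
  split_ifs with hs
  · simpa [evalPv_X] using igusa_cubic_siegelPath_isTheta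
  · obtain ⟨a, b, c, h⟩ := Multiset.card_eq_three.mp s.card_coe
    have hmul := (Pv_siegelPath_isTheta a).mul
      ((Pv_siegelPath_isTheta b).mul (Pv_siegelPath_isTheta c))
    simpa [h, evalPv_X, pow_add] using hmul

lemma linearIndependent_evalPv_cubic : LinearIndependent ℂ (evalPv ∘ cubic) := by
  refine LinearIndependent.of_comp
    (LinearMap.funLeft ℂ ℂ fun n => (⟨siegelPath n, siegelPath_mem n⟩ : SiegelH2)) ?_
  exact linearIndependent_of_isTheta_pow (nome_tendsto.mono_right (nhdsGT_le_nhdsNE 0))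
    cubicOrder_injective evalPv_cubic_siegelPath_isTheta

lemma span_cubic : Submodule.span ℂ (Set.range cubic) = homogeneousSubmodule (Fin 5) ℂ 3 := by
  have prod_X_mem (a b c : Fin 5) : X a * (X b * X c) ∈ homogeneousSubmodule (Fin 5) ℂ 3 :=
    (isHomogeneous_X ℂ a).mul ((isHomogeneous_X ℂ b).mul (isHomogeneous_X ℂ c))
  refine le_antisymm (Submodule.span_le.mpr ?_)
    (homogeneousSubmodule_le_of_prod_mem homogeneousSubmodule_one_eq_span_X.le fun a => ?_)
  · rintro _ ⟨s, rfl⟩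
    unfold cubic
    split_ifs with hs
    · rw [sq, mul_assoc (X 1)]
      exact Submodule.sub_mem _ (prod_X_mem 0 4 4) (Submodule.smul_mem _ _ (prod_X_mem 1 2 3))
    · obtain ⟨a, b, c, h⟩ := Multiset.card_eq_three.mp s.card_coe
      simpa [h] using prod_X_mem a b c
  · have cubic_mem (s : Sym (Fin 5) 3) : cubic s ∈ Submodule.span ℂ (Set.range cubic) :=
      Submodule.subset_span (Set.mem_range_self s)
    have prod_eq : ∏ j, (X (a j) : MvPolynomial (Fin 5) ℂ)
        = (({a 0, a 1, a 2} : Multiset (Fin 5)).map X).prod := by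
      simp [Fin.prod_univ_three, mul_assoc]
    rw [prod_eq]
    by_cases ha : ({a 0, a 1, a 2} : Multiset (Fin 5)) = {0, 4, 4}
    · have cubic_add : cubic ⟨{0, 4, 4}, rfl⟩ + (2 : ℂ) • cubic ⟨{1, 2, 3}, rfl⟩
          = (({0, 4, 4} : Multiset (Fin 5)).map X).prod := by
        have cubic_044 : cubic ⟨{0, 4, 4}, rfl⟩ = X 0 * X 4 ^ 2 - (2 : ℂ) • (X 1 * X 2 * X 3) :=
          if_pos rfl
        have cubic_123 : cubic ⟨{1, 2, 3}, rfl⟩ = (({1, 2, 3} : Multiset (Fin 5)).map X).prod :=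
          if_neg (by decide)
        rw [cubic_044, cubic_123]
        simp [sq, mul_assoc]
      rw [ha, ← cubic_add]
      exact Submodule.add_mem _ (cubic_mem _) (Submodule.smul_mem _ _ (cubic_mem _))
    · have cubic_eq : cubic ⟨{a 0, a 1, a 2}, rfl⟩
          = (({a 0, a 1, a 2} : Multiset (Fin 5)).map X).prod := if_neg ha
      exact cubic_eq ▸ cubic_mem _

theorem disjoint_homogeneousSubmodule_three_ker_evalPv :
    Disjoint (homogeneousSubmodule (Fin 5) ℂ 3) (LinearMap.ker evalPv.toLinearMap) := by
  rw [← span_cubic]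
  exact Submodule.range_ker_disjoint (f := evalPv.toLinearMap) linearIndependent_evalPv_cubic

end NoCubicRelation

section OddTripleSpan

lemma evalPv_thetaForm (d : Fin 10) (τ : SiegelH2) :
    evalPv (thetaForm d) τ = theta (δev d) τ.1 ^ 4 := by
  simp [evalPv, aeval_thetaForm, theta_pow_four d τ.2]

theorem map_evalPv_oddSpan : oddSpan.map evalPv.toLinearMap = Wodd := by
  rw [oddSpan, Submodule.map_span, Wodd]
  congr 1
  ext g
  constructor
  · rintro ⟨_, ⟨a, b, c, h, rfl⟩, rfl⟩
    exact ⟨a, b, c, h, funext fun τ => by simp [evalPv_thetaForm]⟩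
  · rintro ⟨a, b, c, h, rfl⟩
    exact ⟨_, ⟨a, b, c, h, rfl⟩, funext fun τ => by simp [evalPv_thetaForm]⟩

theorem finrank_Wodd : Module.finrank ℂ Wodd = 20 := by
  have disjoint_ker : Disjoint oddSpan (LinearMap.ker evalPv.toLinearMap) :=
    disjoint_homogeneousSubmodule_three_ker_evalPv.mono_left oddSpan_le_homogeneousSubmodule
  have finrank_eq : Module.finrank ℂ Wodd = Module.finrank ℂ oddSpan := by
    rw [← map_evalPv_oddSpan, ← LinearMap.range_domRestrict]
    exact LinearMap.finrank_range_of_inj (LinearMap.injective_domRestrict_iff.mpr disjoint_ker)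
  have finrank_cubics : Module.finrank ℂ (homogeneousSubmodule (Fin 5) ℂ 3) = 35 := by
    rw [finrank_homogeneousSubmodule, Fintype.card_fin, Nat.multichoose_eq]
    rfl
  rw [finrank_eq]
  exact Nat.add_right_cancel (finrank_oddSpan_add_fifteen.trans finrank_cubics)

theorem Dd_mem_Wodd (d : Fin 10) : (fun τ : SiegelH2 => Dd d τ.1) ∈ Wodd := by
  rw [← map_evalPv_oddSpan]
  refine ⟨igusaDerivative d, igusaDerivative_mem_oddSpan d, funext fun τ => ?_⟩
  simp [igusaDerivative, Dd, evalPv_thetaForm, ← pow_mul]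

/-- The characteristics `ν_{kᵢ} + ν_{kⱼ} + ν_{kₘ}` in the definition of `Ξ₆[δ]`. -/
def xiChar (d : Fin 10) (i j m : Fin 3) : Char :=
  addChar (addChar (νodd (triad d (Fin.castLE (by norm_num) i)))
    (νodd (triad d (Fin.castLE (by norm_num) j)))) (νodd (triad d (⟨m.1 + 3, by omega⟩ : Fin 6)))

lemma exists_xiChar_eq : ∀ d i j, i < j → ∃ a b c, xiChar d i j 0 = δev a ∧
    xiChar d i j 1 = δev b ∧ xiChar d i j 2 = δev c ∧ IsOddTriple a b c := by
  decide +kernel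

theorem Xi6_mem_Wodd (d : Fin 10) : (fun τ : SiegelH2 => Xi6 d τ.1) ∈ Wodd := by
  have Xi6_eq : (fun τ : SiegelH2 => Xi6 d τ.1) = ∑ i : Fin 3, ∑ j : Fin 3,
      if i < j then
        sig (νodd (triad d (Fin.castLE (by norm_num) i)))
          (νodd (triad d (Fin.castLE (by norm_num) j))) •
          fun τ : SiegelH2 => ∏ m, theta (xiChar d i j m) τ.1 ^ 4
      else 0 := by
    funext τ
    simp only [Xi6, Finset.sum_apply, ite_apply]
    rfl
  rw [Xi6_eq]
  refine Submodule.sum_mem _ fun i _ => Submodule.sum_mem _ fun j _ => ?_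
  split_ifs with hij
  · obtain ⟨a, b, c, ha, hb, hc, habc⟩ := exists_xiChar_eq d i j hij
    refine Submodule.smul_mem _ _ (Submodule.subset_span ⟨a, b, c, habc, ?_⟩)
    simp only [Fin.prod_univ_three, ha, hb, hc]
  · exact Submodule.zero_mem _

theorem fδ_mem_Wodd (d : Fin 10) : (fun τ : SiegelH2 => fδ d τ.1) ∈ Wodd :=
  Submodule.sub_mem _ (Submodule.smul_mem _ (2 : ℂ) (Xi6_mem_Wodd d)) (Dd_mem_Wodd d)

end OddTripleSpan

/-- `W` has dimension exactly 20 and contains every `Ξ₆[δ]` and every `f_δ`. -/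
theorem statement15 :
    Module.finrank ℂ ↥Wodd = 20 ∧
    ∀ d : Fin 10,
      (fun τ : SiegelH2 => Xi6 d τ.1) ∈ Wodd ∧ (fun τ : SiegelH2 => fδ d τ.1) ∈ Wodd :=
  ⟨finrank_Wodd, fun d => ⟨Xi6_mem_Wodd d, fδ_mem_Wodd d⟩⟩

end TwoLoop
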